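/- arXiv:1101.2833 — 2 statements merged into one kernel-verified Lean document; each statement's English description precedes it below -/
import Mathlib

section
/- Let n ≥ 2 and −1 ≤ k ≤ n − 2, let E be a smooth closed embedded k-dimensional submanifold of ℝⁿ (with E = ∅ when k = −1, and E a finite set of points when k = 0), and let Ω ⊂ ℝⁿ be a domain (bounded connected open set). Assume u ∈ LSC(Ω̄ ∖ E) satisfies λ₁(∇²u) + ⋯ + λ_{k+2}(∇²u) ≤ 0 in Ω ∖ E in the viscosity sense, where λ₁(M) ≤ ⋯ ≤ λₙ(M) denote the eigenvalues of a symmetric matrix M in non-decreasing order, and inf_{Ω∖E} u > −∞. Then u ≥ inf_{∂Ω ∖ E} u on Ω ∖ E. -/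
open Set Metric

noncomputable section

/-- ℝⁿ, realized as Euclidean space on `Fin n`. -/
abbrev En (n : ℕ) := EuclideanSpace ℝ (Fin n)

/-- The Hessian matrix `∇²φ(x)` of a real-valued function on ℝⁿ. -/
noncomputable def hess {n : ℕ} (φ : En n → ℝ) (x : En n) : Matrix (Fin n) (Fin n) ℝ :=
  Matrix.of fun i j =>
    iteratedFDeriv ℝ 2 φ x ![EuclideanSpace.single i 1, EuclideanSpace.single j 1]

/-- `u` satisfies `F(x, u, ∇u, ∇²u) ≤ f(x)` in the open set `O` in the viscosity sense:
for every test function `φ ∈ C²(O)` and every `x₀ ∈ O` at which `u - φ` attains a local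
minimum with `u x₀ = φ x₀`, one has `F(x₀, φ(x₀), ∇φ(x₀), ∇²φ(x₀)) ≤ f(x₀)`. -/
def IsViscositySupersolution {n : ℕ}
    (F : En n → ℝ → En n → Matrix (Fin n) (Fin n) ℝ → ℝ)
    (f : En n → ℝ) (O : Set (En n)) (u : En n → ℝ) : Prop :=
  ∀ φ : En n → ℝ, ContDiffOn ℝ 2 φ O → ∀ x₀ ∈ O, u x₀ = φ x₀ →
    IsLocalMinOn (fun x => u x - φ x) O x₀ →
    F x₀ (φ x₀) (gradient φ x₀) (hess φ x₀) ≤ f x₀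

/-- `E` is a smooth (C^∞) closed (compact, boundaryless) embedded `k`-dimensional
submanifold of ℝⁿ: `E` is compact and near each of its points there is a smooth chart
straightening `E` onto the coordinate subspace `{z : z_i = 0 for i ≥ k}`. -/
def IsSmoothClosedSubmanifold {n : ℕ} (k : ℕ) (E : Set (En n)) : Prop :=
  IsCompact E ∧
  ∀ x ∈ E, ∃ (U V : Set (En n)) (φ ψ : En n → En n),
    IsOpen U ∧ IsOpen V ∧ x ∈ U ∧
    ContDiffOn ℝ (⊤ : ℕ∞) φ U ∧ ContDiffOn ℝ (⊤ : ℕ∞) ψ V ∧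
    Set.MapsTo φ U V ∧ Set.MapsTo ψ V U ∧
    (∀ y ∈ U, ψ (φ y) = y) ∧ (∀ z ∈ V, φ (ψ z) = z) ∧
    φ '' (E ∩ U) = V ∩ {z : En n | ∀ i : Fin n, k ≤ (i : ℕ) → z i = 0}

/-- The eigenvalues of a symmetric matrix, listed in non-decreasing order
`λ₁(M) ≤ ⋯ ≤ λₙ(M)` (junk value `0` for non-symmetric matrices). -/
noncomputable def sortedEigs {n : ℕ} (M : Matrix (Fin n) (Fin n) ℝ) : Fin n → ℝ :=
  if h : M.IsHermitian then h.eigenvalues ∘ Tuple.sort h.eigenvalues else fun _ => 0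

/-- `λ₁(M) + ⋯ + λ_m(M)`, the sum of the `m` smallest eigenvalues of a symmetric matrix. -/
noncomputable def sumSmallestEigs {n : ℕ} (m : ℕ) (M : Matrix (Fin n) (Fin n) ℝ) : ℝ :=
  ∑ i : Fin n, if (i : ℕ) < m then sortedEigs M i else 0

/-!
The submanifold `E` is polar for the operator `λ₁ + ⋯ + λ_{k+2}`: given a point `x ∉ E`, there is a
smooth `w` with `λ₁(∇²w) + ⋯ + λ_{k+2}(∇²w) > 0` that is nonpositive on `closure Ω`, very negative
on `E`, and still at least `-ε` at `x`. If `a` is a lower bound of `u` on `∂Ω \ E`, then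
`u ≥ a + w` near `E`, because `u` is bounded below, and on `∂Ω \ E`. A failure elsewhere would
produce an interior minimum of `u - (a + w)`, at which `a + w` contradicts the viscosity
inequality. Hence `u x ≥ a - ε`.

The functions `w` come from potentials with kernel `-‖x - y‖⁻ᵏ` (`log ‖x - y‖` for `k = 0`), whose
Hessian has trace at least `0` on every `(k+2)`-plane. Spread over a `k`-dimensional patch, this
kernel is just singular enough to diverge, logarithmically, on the patch, while it stays bounded at
each point off it. Regularized Riemann sums replace the integrals, so that only finite sums of
smooth kernels are differentiated.
-/

section StrictlyPlurisubharmonic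

open scoped InnerProductSpace

variable {V : Type*} [NormedAddCommGroup V] [InnerProductSpace ℝ V] {m : ℕ}

/-- Strict `m`-plurisubharmonicity in the sense of Harvey and Lawson: `w` is `C²` and its Hessian
has positive trace on every `m`-dimensional subspace. For a `C²` function on `ℝⁿ` with `m ≤ n` this
means `λ₁(∇²w) + ⋯ + λ_m(∇²w) > 0` everywhere. -/
structure StrictlyPlurisubharmonic (m : ℕ) (w : V → ℝ) : Prop where
  contDiff : ContDiff ℝ 2 w
  trace_pos : ∀ (x : V) (v : Fin m → V), Orthonormal ℝ v →
    0 < ∑ i, iteratedFDeriv ℝ 2 w x ![v i, v i]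

namespace StrictlyPlurisubharmonic

variable {w w₁ w₂ : V → ℝ}

lemma add (h₁ : StrictlyPlurisubharmonic m w₁) (h₂ : StrictlyPlurisubharmonic m w₂) :
    StrictlyPlurisubharmonic m (w₁ + w₂) where
  contDiff := h₁.contDiff.add h₂.contDiff
  trace_pos x v hv := by
    simp only [iteratedFDeriv_add_apply h₁.contDiff.contDiffAt h₂.contDiff.contDiffAt,
      add_apply, Finset.sum_add_distrib]
    exact add_pos (h₁.trace_pos x v hv) (h₂.trace_pos x v hv)

lemma const_smul (h : StrictlyPlurisubharmonic m w) {t : ℝ} (ht : 0 < t) :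
    StrictlyPlurisubharmonic m (t • w) where
  contDiff := h.contDiff.const_smul t
  trace_pos x v hv := by
    simp only [iteratedFDeriv_const_smul_apply h.contDiff.contDiffAt,
      smul_apply, ← Finset.smul_sum]
    exact smul_pos ht (h.trace_pos x v hv)

lemma const_add (h : StrictlyPlurisubharmonic m w) (a : ℝ) :
    StrictlyPlurisubharmonic m (fun x => a + w x) where
  contDiff := contDiff_const.add h.contDiff
  trace_pos x v hv := by
    have hfderiv : fderiv ℝ (fun x => a + w x) = fderiv ℝ w := funext fun _ => fderiv_const_add a
    simpa only [iteratedFDeriv_two_apply, hfderiv] using h.trace_pos x v hv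

lemma sum {ι : Type*} {s : Finset ι} (hs : s.Nonempty) {w : ι → V → ℝ}
    (h : ∀ i ∈ s, StrictlyPlurisubharmonic m (w i)) :
    StrictlyPlurisubharmonic m (∑ i ∈ s, w i) :=
  Finset.sum_induction_nonempty w _ (fun _ _ => add) hs h

end StrictlyPlurisubharmonic

lemma iteratedFDeriv_two_comp_norm_sub_sq {g g₁ : ℝ → ℝ} {g₂ : ℝ} (x y v : V)
    (hg : ∀ s, 0 ≤ s → HasDerivAt g (g₁ s) s) (hg₁ : HasDerivAt g₁ g₂ (‖x - y‖ ^ 2)) :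
    iteratedFDeriv ℝ 2 (fun z => g (‖z - y‖ ^ 2)) x ![v, v] =
      2 * g₁ (‖x - y‖ ^ 2) * ‖v‖ ^ 2 + 4 * g₂ * ⟪v, x - y⟫_ℝ ^ 2 := by
  have hsq (z : V) : HasFDerivAt (fun z : V => ‖z - y‖ ^ 2) (2 • innerSL ℝ (z - y)) z := by
    simpa using ((hasFDerivAt_id z).sub_const y).norm_sq
  have hfderiv : fderiv ℝ (fun z : V => g (‖z - y‖ ^ 2)) =
      fun z => g₁ (‖z - y‖ ^ 2) • (2 • innerSL ℝ (z - y)) :=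
    funext fun z => ((hg _ (sq_nonneg _)).comp_hasFDerivAt z (hsq z)).fderiv
  have hinner : HasFDerivAt (fun z : V => 2 • innerSL ℝ (z - y))
      (2 • (innerSL ℝ : V →L[ℝ] V →L[ℝ] ℝ)) x :=
    (2 • innerSL ℝ).hasFDerivAt (x := x - y) |>.comp x ((hasFDerivAt_id x).sub_const y)
  have hfderiv₂ := ((hg₁.comp_hasFDerivAt x (hsq x)).smul hinner).fderiv
  rw [iteratedFDeriv_two_apply, hfderiv]
  change fderiv ℝ ((g₁ ∘ fun z : V => ‖z - y‖ ^ 2) • fun z : V => 2 • innerSL ℝ (z - y)) x v v = _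
  rw [hfderiv₂]
  simp only [Function.comp_apply, add_apply, smul_apply, ContinuousLinearMap.smulRight_apply,
    innerSL_apply_apply, nsmul_eq_mul, Nat.cast_ofNat, smul_eq_mul, real_inner_comm v]
  rw [show innerSL ℝ v v = ‖v‖ ^ 2 from real_inner_self_eq_norm_sq v]
  ring

-- By the Bessel inequality an orthonormal `m`-frame captures at most `‖x - y‖²` of the radial
-- direction, the only one in which the Hessian can be negative.
lemma strictlyPlurisubharmonic_comp_norm_sub_sq (y : V) {g g₁ g₂ : ℝ → ℝ}
    (hg_contDiff : ∀ s, 0 ≤ s → ContDiffAt ℝ 2 g s)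
    (hg : ∀ s, 0 ≤ s → HasDerivAt g (g₁ s) s) (hg₁ : ∀ s, 0 ≤ s → HasDerivAt g₁ (g₂ s) s)
    (hg₂ : ∀ s, 0 ≤ s → g₂ s ≤ 0) (hpos : ∀ s, 0 ≤ s → 0 < 2 * m * g₁ s + 4 * s * g₂ s) :
    StrictlyPlurisubharmonic m (fun x : V => g (‖x - y‖ ^ 2)) where
  contDiff := contDiff_iff_contDiffAt.2 fun x => (hg_contDiff _ (sq_nonneg _)).comp x
    ((contDiff_id.sub contDiff_const).norm_sq ℝ).contDiffAt
  trace_pos x v hv := by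
    have bessel : ∑ i, ⟪v i, x - y⟫_ℝ ^ 2 ≤ ‖x - y‖ ^ 2 := by
      simpa only [Real.norm_eq_abs, sq_abs] using
        hv.sum_inner_products_le (x - y) (s := Finset.univ)
    have hs := sq_nonneg ‖x - y‖
    calc 0 < 2 * m * g₁ (‖x - y‖ ^ 2) + 4 * ‖x - y‖ ^ 2 * g₂ (‖x - y‖ ^ 2) := hpos _ hs
      _ ≤ 2 * m * g₁ (‖x - y‖ ^ 2) + 4 * g₂ (‖x - y‖ ^ 2) * ∑ i, ⟪v i, x - y⟫_ℝ ^ 2 := by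
        linarith [mul_le_mul_of_nonpos_left bessel (hg₂ _ hs)]
      _ = ∑ i, iteratedFDeriv ℝ 2 (fun z => g (‖z - y‖ ^ 2)) x ![v i, v i] := by
        simp only [iteratedFDeriv_two_comp_norm_sub_sq x y _ hg (hg₁ _ hs), hv.1, one_pow,
          mul_one, Finset.sum_add_distrib, ← Finset.mul_sum, Finset.sum_const, Finset.card_univ,
          Fintype.card_fin, nsmul_eq_mul]
        ring

lemma strictlyPlurisubharmonic_norm_sub_sq (hm : 0 < m) (y : V) :
    StrictlyPlurisubharmonic m (fun x : V => ‖x - y‖ ^ 2) :=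
  strictlyPlurisubharmonic_comp_norm_sub_sq y (g := id) (g₁ := fun _ => 1) (g₂ := fun _ => 0)
    (fun _ _ => contDiffAt_id) (fun s _ => hasDerivAt_id s) (fun _ _ => hasDerivAt_const _ _)
    (fun _ _ => le_rfl) (fun _ _ => by simpa using hm)

-- For `η = 0` these are the primitives for which the trace vanishes identically on `m`-planes
-- through `y`: `log` for `m = 2`, and `-s ^ (-(m - 2) / 2)` for `m > 2`.
lemma strictlyPlurisubharmonic_of_hasDerivAt_rpow (hm : 0 < m) (y : V) {η c : ℝ} (hη : 0 < η)
    (hc : 0 < c) {g : ℝ → ℝ} (hg_contDiff : ∀ s, 0 ≤ s → ContDiffAt ℝ 2 g s)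
    (hg : ∀ s, 0 ≤ s → HasDerivAt g (c * (s + η) ^ (-(m / 2 : ℝ))) s) :
    StrictlyPlurisubharmonic m (fun x : V => g (‖x - y‖ ^ 2)) := by
  refine strictlyPlurisubharmonic_comp_norm_sub_sq y (g₁ := fun s => c * (s + η) ^ (-(m / 2 : ℝ)))
    (g₂ := fun s => c * (-(m / 2 : ℝ) * (s + η) ^ (-(m / 2 : ℝ) - 1)))
    hg_contDiff hg (fun s hs => ?_) (fun s hs => ?_) (fun s hs => ?_)
  · simpa using (((hasDerivAt_id s).add_const η).rpow_const (p := -(m / 2 : ℝ))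
      (Or.inl (add_pos_of_nonneg_of_pos hs hη).ne')).const_mul c
  · have : 0 ≤ c * ((m / 2 : ℝ) * (s + η) ^ (-(m / 2 : ℝ) - 1)) := by positivity
    linarith
  · have hsη : 0 < s + η := by positivity
    have hpow : (s + η) ^ (-(m / 2 : ℝ)) = (s + η) ^ (-(m / 2 : ℝ) - 1) * (s + η) := by
      rw [Real.rpow_sub_one hsη.ne', div_mul_cancel₀ _ hsη.ne']
    have htrace : 2 * m * (c * (s + η) ^ (-(m / 2 : ℝ))) +
        4 * s * (c * (-(m / 2 : ℝ) * (s + η) ^ (-(m / 2 : ℝ) - 1))) =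
        2 * m * c * η * (s + η) ^ (-(m / 2 : ℝ) - 1) := by
      rw [hpow]
      ring
    rw [htrace]
    positivity

lemma strictlyPlurisubharmonic_log (y : V) {η : ℝ} (hη : 0 < η) :
    StrictlyPlurisubharmonic 2 (fun x : V => Real.log (‖x - y‖ ^ 2 + η)) := by
  refine strictlyPlurisubharmonic_of_hasDerivAt_rpow (g := fun s => Real.log (s + η)) two_pos y hη
    one_pos (fun s hs => ?_) (fun s hs => ?_)
  · exact (contDiffAt_id.add contDiffAt_const).log (add_pos_of_nonneg_of_pos hs hη).ne'
  · simpa [Real.rpow_neg_one] using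
      ((hasDerivAt_id s).add_const η).log (add_pos_of_nonneg_of_pos hs hη).ne'

end StrictlyPlurisubharmonic

section Eigenvalues

variable {n m : ℕ}

lemma exists_orthonormal_sumSmallestEigs_eq (hmn : m ≤ n) {M : Matrix (Fin n) (Fin n) ℝ}
    (hM : M.IsHermitian) :
    ∃ v : Fin m → En n, Orthonormal ℝ v ∧
      sumSmallestEigs m M = ∑ i, (v i).ofLp ⬝ᵥ M.mulVec (v i).ofLp := by
  let σ := Tuple.sort hM.eigenvalues
  refine ⟨fun i => hM.eigenvectorBasis (σ (Fin.castLE hmn i)),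
    hM.eigenvectorBasis.orthonormal.comp _ (σ.injective.comp (Fin.castLE_injective hmn)), ?_⟩
  have hfilter : Finset.univ.filter (fun i : Fin n => (i : ℕ) < m) =
      Finset.univ.map (Fin.castLEEmb hmn) := by
    ext i
    simp only [Finset.mem_filter, Finset.mem_univ, true_and, Finset.mem_map, Fin.castLEEmb_apply]
    exact ⟨fun hi => ⟨⟨i, hi⟩, rfl⟩, by rintro ⟨j, rfl⟩; exact j.2⟩
  rw [sumSmallestEigs, sortedEigs, dif_pos hM, ← Finset.sum_filter, hfilter, Finset.sum_map]
  refine Finset.sum_congr rfl fun i _ => ?_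
  simpa using hM.eigenvalues_eq (σ (Fin.castLE hmn i))

lemma isHermitian_hess {w : En n → ℝ} {x : En n} (hw : ContDiffAt ℝ 2 w x) :
    (hess w x).IsHermitian := by
  ext i j
  simpa [hess, iteratedFDeriv_two_apply] using hw.isSymmSndFDerivAt (by simp) _ _

lemma dotProduct_hess_mulVec (w : En n → ℝ) (x v : En n) :
    v.ofLp ⬝ᵥ (hess w x).mulVec v.ofLp = iteratedFDeriv ℝ 2 w x ![v, v] := by
  have hv : v = ∑ i, v i • EuclideanSpace.single i (1 : ℝ) := by
    ext j
    simp [Finset.sum_apply, Pi.single_apply]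
  conv_rhs => rw [iteratedFDeriv_two_apply, hv]
  rw [Matrix.dotProduct_mulVec]
  simp [Matrix.vecMul, dotProduct, hess, iteratedFDeriv_two_apply, mul_comm]

lemma StrictlyPlurisubharmonic.sumSmallestEigs_hess_pos (hmn : m ≤ n) {w : En n → ℝ}
    (hw : StrictlyPlurisubharmonic m w) (x : En n) : 0 < sumSmallestEigs m (hess w x) := by
  obtain ⟨v, hv, hsum⟩ :=
    exists_orthonormal_sumSmallestEigs_eq hmn (isHermitian_hess hw.contDiff.contDiffAt (x := x))
  simpa only [hsum, dotProduct_hess_mulVec] using hw.trace_pos x v hv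

end Eigenvalues

section PolarSets

variable {V : Type*} [NormedAddCommGroup V] [InnerProductSpace ℝ V] {m : ℕ} {x₁ : V} {B : Set V}

/-- The part of `S` in `B` has zero capacity seen from the pole `x₁`: there are strictly
`m`-plurisubharmonic functions, nonpositive on `B`, that are arbitrarily negative on `S ∩ B` but
arbitrarily close to `0` at `x₁`. Fixing `x₁` and `B` makes the notion stable under subsets and
finite unions. -/
def IsPolarFrom (m : ℕ) (x₁ : V) (B S : Set V) : Prop :=
  ∀ ε > 0, ∀ K : ℝ, ∃ w : V → ℝ, StrictlyPlurisubharmonic m w ∧ (∀ x ∈ B, w x ≤ 0) ∧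
    -ε ≤ w x₁ ∧ ∀ x ∈ S ∩ B, w x < -K

/-- `E` is an `m`-polar set: on bounded sets it has zero capacity, in terms of strictly
`m`-plurisubharmonic functions, seen from every pole outside `E`. -/
def IsPolar (m : ℕ) (E : Set V) : Prop :=
  ∀ x₁ ∉ E, ∀ B : Set V, Bornology.IsBounded B → IsPolarFrom m x₁ B E

lemma IsPolarFrom.mono {S T : Set V} (hT : IsPolarFrom m x₁ B T) (hST : S ⊆ T) :
    IsPolarFrom m x₁ B S := fun ε hε K =>
  let ⟨w, hw, hw_nonpos, hw_pole, hw_lt⟩ := hT ε hε K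
  ⟨w, hw, hw_nonpos, hw_pole, fun x hx => hw_lt x ⟨hST hx.1, hx.2⟩⟩

lemma IsPolarFrom.union {S T : Set V} (hS : IsPolarFrom m x₁ B S) (hT : IsPolarFrom m x₁ B T) :
    IsPolarFrom m x₁ B (S ∪ T) := by
  intro ε hε K
  obtain ⟨w, hw, hw_nonpos, hw_pole, hw_lt⟩ := hS (ε / 2) (half_pos hε) K
  obtain ⟨w', hw', hw'_nonpos, hw'_pole, hw'_lt⟩ := hT (ε / 2) (half_pos hε) K
  refine ⟨w + w', hw.add hw', fun x hx => add_nonpos (hw_nonpos x hx) (hw'_nonpos x hx), ?_, ?_⟩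
  · rw [Pi.add_apply]
    linarith
  · rintro x ⟨hxS | hxT, hxB⟩ <;> rw [Pi.add_apply]
    · linarith [hw_lt x ⟨hxS, hxB⟩, hw'_nonpos x hxB]
    · linarith [hw'_lt x ⟨hxT, hxB⟩, hw_nonpos x hxB]

lemma isPolarFrom_of_bounded_at_pole {S : Set V} (C : ℝ)
    (h : ∀ K : ℝ, ∃ w : V → ℝ, StrictlyPlurisubharmonic m w ∧ (∀ x ∈ B, w x ≤ 0) ∧
      -C ≤ w x₁ ∧ ∀ x ∈ S ∩ B, w x < -K) :
    IsPolarFrom m x₁ B S := by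
  intro ε hε K
  have hC : 0 < |C| + 1 := by positivity
  let t := ε / (|C| + 1)
  have ht : 0 < t := div_pos hε hC
  obtain ⟨w, hw, hw_nonpos, hw_pole, hw_lt⟩ := h (K / t)
  refine ⟨t • w, hw.const_smul ht, fun x hx => smul_nonpos_of_nonneg_of_nonpos ht.le
    (hw_nonpos x hx), ?_, fun x hx => ?_⟩
  · calc -ε = t * -(|C| + 1) := by simp only [t]; field_simp
      _ ≤ t * w x₁ := by gcongr; linarith [le_abs_self C]
  · calc t * w x < t * -(K / t) := mul_lt_mul_of_pos_left (hw_lt x hx) ht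
      _ = -K := by field_simp

lemma isPolarFrom_empty (hm : 0 < m) (x₁ : V) (hB : Bornology.IsBounded B) :
    IsPolarFrom m x₁ B ∅ := by
  obtain ⟨ρ, hρ⟩ := hB.subset_closedBall x₁
  refine isPolarFrom_of_bounded_at_pole (ρ ^ 2) fun K => ⟨_,
    (strictlyPlurisubharmonic_norm_sub_sq hm x₁).const_add (-ρ ^ 2), fun x hx => ?_, ?_, by simp⟩
  · have hxρ : ‖x - x₁‖ ≤ ρ := mem_closedBall_iff_norm.1 (hρ hx)
    nlinarith [norm_nonneg (x - x₁)]
  · simp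

lemma isPolarFrom_singleton {y : V} (hy : x₁ ≠ y) (hB : Bornology.IsBounded B) :
    IsPolarFrom 2 x₁ B {y} := by
  obtain ⟨ρ, hρ⟩ := hB.subset_closedBall y
  let A := ρ ^ 2 + 1
  have hd : 0 < ‖x₁ - y‖ := norm_sub_pos_iff.2 hy
  refine isPolarFrom_of_bounded_at_pole (Real.log A - Real.log (‖x₁ - y‖ ^ 2)) fun K => ?_
  let η := min 1 (Real.exp (Real.log A - K - 1))
  have hη : 0 < η := lt_min one_pos (Real.exp_pos _)
  refine ⟨_, (strictlyPlurisubharmonic_log y hη).const_add (-Real.log A), fun x hx => ?_, ?_, ?_⟩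
  · have hxρ : ‖x - y‖ ≤ ρ := mem_closedBall_iff_norm.1 (hρ hx)
    have hle : ‖x - y‖ ^ 2 + η ≤ A := add_le_add (by gcongr) (min_le_left _ _)
    linarith [Real.log_le_log (by positivity) hle]
  · have hle : ‖x₁ - y‖ ^ 2 ≤ ‖x₁ - y‖ ^ 2 + η := by linarith
    linarith [Real.log_le_log (by positivity) hle]
  · rintro _ ⟨rfl, -⟩
    have hlog : Real.log η ≤ Real.log A - K - 1 :=
      (Real.log_le_iff_le_exp hη).2 (min_le_right _ _)
    simp only [sub_self, norm_zero, ne_eq, OfNat.ofNat_ne_zero, not_false_eq_true, zero_pow,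
      zero_add]
    linarith

lemma isPolar_empty (hm : 0 < m) : IsPolar m (∅ : Set V) :=
  fun x₁ _ _ hB => isPolarFrom_empty hm x₁ hB

end PolarSets

section RieszKernel

variable {V : Type*} [NormedAddCommGroup V] {k : ℕ} {η δ : ℝ} {x y : V}

/-- The Riesz kernel `‖x - y‖⁻ᵏ` with pole `y`, regularized at scale `η`. -/
def rieszKernel (k : ℕ) (η : ℝ) (y x : V) : ℝ :=
  (‖x - y‖ ^ 2 + η ^ 2) ^ (-(k / 2 : ℝ))

lemma rieszKernel_nonneg : 0 ≤ rieszKernel k η y x := by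
  unfold rieszKernel
  positivity

lemma sq_rpow_neg_half (k : ℕ) (hδ : 0 ≤ δ) : (δ ^ 2) ^ (-(k / 2 : ℝ)) = (δ ^ k)⁻¹ := by
  rw [← Real.rpow_natCast_mul hδ, ← Real.rpow_natCast, ← Real.rpow_neg hδ]
  congr 1
  push_cast
  ring

lemma rieszKernel_le (hδ : 0 < δ) (h : δ ≤ ‖x - y‖) : rieszKernel k η y x ≤ (δ ^ k)⁻¹ := by
  rw [← sq_rpow_neg_half k hδ.le]
  refine Real.rpow_le_rpow_of_nonpos (by positivity) ?_ (neg_nonpos.2 (by positivity))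
  nlinarith [sq_nonneg η]

lemma le_rieszKernel (hη : 0 < η) (hηδ : η ≤ δ) (h : ‖x - y‖ ≤ δ) :
    ((2 * δ) ^ k)⁻¹ ≤ rieszKernel k η y x := by
  rw [← sq_rpow_neg_half k (by linarith)]
  refine Real.rpow_le_rpow_of_nonpos (by positivity) ?_ (neg_nonpos.2 (by positivity))
  nlinarith [norm_nonneg (x - y)]

lemma strictlyPlurisubharmonic_neg_rieszKernel [InnerProductSpace ℝ V] (hk : 0 < k) (hη : 0 < η)
    (y : V) : StrictlyPlurisubharmonic (k + 2) (-rieszKernel k η y) := by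
  have hη' : 0 < η ^ 2 := by positivity
  refine strictlyPlurisubharmonic_of_hasDerivAt_rpow (c := k / 2)
    (g := fun s => -(s + η ^ 2) ^ (-(k / 2 : ℝ))) (by positivity) y hη' (by positivity)
    (fun s hs => ?_) (fun s hs => ?_)
  · exact ((contDiffAt_id.add contDiffAt_const).rpow_const_of_ne
      (add_pos_of_nonneg_of_pos hs hη').ne').neg
  · refine ((((hasDerivAt_id s).add_const (η ^ 2)).rpow_const (p := -(k / 2 : ℝ))
      (Or.inl (add_pos_of_nonneg_of_pos hs hη').ne')).neg).congr_deriv ?_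
    have hexp : -(((k + 2 : ℕ) : ℝ) / 2) = -(k / 2 : ℝ) - 1 := by
      push_cast
      ring
    rw [hexp, id]
    ring

end RieszKernel

section Grid

variable {k M : ℕ}

/-- The discrete cube `{0, …, M - 1}ᵏ`. -/
def latticeBox (k M : ℕ) : Finset (Fin k → ℕ) :=
  Fintype.piFinset fun _ => Finset.range M

lemma mem_latticeBox {p : Fin k → ℕ} : p ∈ latticeBox k M ↔ ∀ i, p i < M := by
  simp [latticeBox]

lemma card_latticeBox : (latticeBox k M).card = M ^ k := by
  simp [latticeBox]

-- The shell `latticeBox k (M + 1) \ latticeBox k M` has at least `(M + 1) ^ (k - 1)` points.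
lemma harmonic_sum_le_sum_latticeBox (hk : 0 < k) {F : (Fin k → ℕ) → ℝ}
    (hF : ∀ (j : ℕ) (p : Fin k → ℕ), (∀ i, p i ≤ j) → ((j : ℝ) + 1)⁻¹ ^ k ≤ F p) (M : ℕ) :
    ∑ j ∈ Finset.range M, ((j : ℝ) + 1)⁻¹ ≤ ∑ p ∈ latticeBox k M, F p := by
  induction M with
  | zero =>
    have : Nonempty (Fin k) := ⟨⟨0, hk⟩⟩
    simp [latticeBox]
  | succ M ih =>
    obtain ⟨l, rfl⟩ := Nat.exists_eq_add_one.2 hk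
    let shell := latticeBox (l + 1) (M + 1) \ latticeBox (l + 1) M
    have hsub : latticeBox (l + 1) M ⊆ latticeBox (l + 1) (M + 1) := fun p hp =>
      mem_latticeBox.2 fun i => (mem_latticeBox.1 hp i).trans M.lt_succ_self
    have hcard : (M + 1) ^ l ≤ shell.card := by
      rw [Finset.card_sdiff_of_subset hsub, card_latticeBox, card_latticeBox]
      have hpow : M ^ l * M ≤ (M + 1) ^ l * M := by gcongr; exact M.le_succ
      rw [pow_succ, pow_succ, mul_add_one]
      omega
    have hshell : ((M : ℝ) + 1)⁻¹ ≤ ∑ p ∈ shell, F p := calc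
      ((M : ℝ) + 1)⁻¹ = ((M + 1) ^ l : ℕ) * ((M : ℝ) + 1)⁻¹ ^ (l + 1) := by
        push_cast
        rw [inv_pow, pow_succ]
        field_simp
      _ ≤ shell.card • ((M : ℝ) + 1)⁻¹ ^ (l + 1) := by
        rw [nsmul_eq_mul]
        gcongr
      _ ≤ ∑ p ∈ shell, F p := Finset.card_nsmul_le_sum _ _ _ fun p hp => hF M p fun i =>
        Nat.le_of_lt_succ (mem_latticeBox.1 (Finset.mem_sdiff.1 hp).1 i)
    rw [Finset.sum_range_succ, ← Finset.sum_sdiff hsub, add_comm]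
    exact add_le_add hshell ih

/-- The grid point with index `q` in the cubic grid of mesh `h` and corner `b`. -/
def gridPoint (b : Fin k → ℝ) (h : ℝ) (q : Fin k → ℕ) : Fin k → ℝ :=
  fun i => b i + h * q i

lemma gridPoint_mem_closedBall {a : Fin k → ℝ} {r h : ℝ} (hh : 0 ≤ h) (hr : 0 ≤ r)
    (hhM : h * M = r) {q : Fin k → ℕ} (hq : q ∈ latticeBox k (3 * M)) :
    gridPoint (fun i => a i - r) h q ∈ closedBall a (2 * r) := by
  refine mem_closedBall_iff_norm.2 ((pi_norm_le_iff_of_nonneg (by positivity)).2 fun i => ?_)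
  have hqi : (q i : ℝ) ≤ 3 * M := by exact_mod_cast (mem_latticeBox.1 hq i).le
  have hle : h * q i ≤ h * (3 * M) := by gcongr
  have hnonneg : 0 ≤ h * q i := by positivity
  rw [Pi.sub_apply, gridPoint, Real.norm_eq_abs, abs_le]
  constructor <;> linarith

-- `a` indexes the corner of the grid cell containing `z`.
lemma exists_dist_gridPoint_le {z b : Fin k → ℝ} {h : ℝ} (hh : 0 < h) (hbz : b ≤ z) {N : ℕ}
    (hzN : ∀ i, z i ≤ b i + h * N) :
    ∃ a : Fin k → ℕ, (∀ i, a i ≤ N) ∧ ∀ (j : ℕ) (p : Fin k → ℕ), (∀ i, p i ≤ j) →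
      dist z (gridPoint b h (a + p)) ≤ h * (j + 1) := by
  have hnonneg (i : Fin k) : 0 ≤ (z i - b i) / h := div_nonneg (sub_nonneg.2 (hbz i)) hh.le
  refine ⟨fun i => ⌊(z i - b i) / h⌋₊, fun i => Nat.floor_le_of_le ?_, fun j p hp => ?_⟩
  · rw [div_le_iff₀ hh]
    linarith [hzN i]
  · refine (dist_pi_le_iff (by positivity)).2 fun i => ?_
    have hfloor_le := (le_div_iff₀ hh).1 (Nat.floor_le (hnonneg i))
    have hlt_floor := (div_lt_iff₀ hh).1 (Nat.lt_floor_add_one ((z i - b i) / h))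
    have hpj : h * p i ≤ h * j := by gcongr; exact_mod_cast hp i
    have hp_nonneg : 0 ≤ h * p i := by positivity
    simp only [gridPoint, Pi.add_apply, Nat.cast_add, Real.dist_eq]
    rw [abs_le]
    constructor <;> linarith

lemma harmonic_sum_le_sum_grid (hk : 0 < k) {a z : Fin k → ℝ} {r h : ℝ} (hh : 0 < h)
    (hhM : h * M = r) (hz : z ∈ closedBall a r) :
    ∑ j ∈ Finset.range M, ((j : ℝ) + 1)⁻¹ ≤ ∑ q ∈ latticeBox k (3 * M),
      (h / max h (dist z (gridPoint (fun i => a i - r) h q))) ^ k := by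
  have hzi (i : Fin k) : |z i - a i| ≤ r := (dist_le_pi_dist z a i).trans hz
  obtain ⟨c, hc, hdist⟩ := exists_dist_gridPoint_le (z := z) (b := fun i => a i - r) (N := 2 * M)
    hh (fun i => by linarith [(abs_le.1 (hzi i)).1])
    (fun i => by push_cast; linarith [(abs_le.1 (hzi i)).2])
  calc ∑ j ∈ Finset.range M, ((j : ℝ) + 1)⁻¹
    _ ≤ ∑ p ∈ latticeBox k M,
          (h / max h (dist z (gridPoint (fun i => a i - r) h (c + p)))) ^ k := by
      refine harmonic_sum_le_sum_latticeBox hk (fun j p hp => ?_) M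
      have hmax : max h (dist z (gridPoint (fun i => a i - r) h (c + p))) ≤ h * (j + 1) :=
        max_le (by nlinarith [j.cast_nonneg (α := ℝ)]) (hdist j p hp)
      gcongr
      rw [inv_eq_one_div, div_le_div_iff₀ (by positivity) (lt_max_of_lt_left hh), one_mul]
      exact hmax
    _ = ∑ q ∈ (latticeBox k M).map (addLeftEmbedding c),
          (h / max h (dist z (gridPoint (fun i => a i - r) h q))) ^ k := by
      simp only [Finset.sum_map, addLeftEmbedding_apply]
    _ ≤ _ := by
      refine Finset.sum_le_sum_of_subset_of_nonneg (fun q hq => ?_) fun _ _ _ => by positivity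
      obtain ⟨p, hp, rfl⟩ := Finset.mem_map.1 hq
      refine mem_latticeBox.2 fun i => ?_
      have hpi := mem_latticeBox.1 hp i
      have hci := hc i
      simp only [addLeftEmbedding_apply, Pi.add_apply]
      omega

end Grid

section LipschitzPatch

variable {V : Type*} [NormedAddCommGroup V] {k M : ℕ} {f : (Fin k → ℝ) → V} {a : Fin k → ℝ}
  {r L : ℝ}

/-- Minus the Riesz potential of the pushforward under `f` of Lebesgue measure on the cube around
`a`, discretized as a Riemann sum over a grid of mesh `r / M` and regularized at scale
`L * (r / M)`. The grid covers `∏ [aᵢ - r, aᵢ + 2r)`, so that it extends by `r` in every positive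
coordinate direction from each point of `closedBall a r`. -/
def gridPotential (f : (Fin k → ℝ) → V) (a : Fin k → ℝ) (r L : ℝ) (M : ℕ) : V → ℝ :=
  ∑ q ∈ latticeBox k (3 * M), (r / M) ^ k •
    -rieszKernel k (L * (r / M)) (f (gridPoint (fun i => a i - r) (r / M) q))

lemma gridPotential_apply (x : V) : gridPotential f a r L M x = -∑ q ∈ latticeBox k (3 * M),
    (r / M) ^ k * rieszKernel k (L * (r / M)) (f (gridPoint (fun i => a i - r) (r / M) q)) x := by
  simp [gridPotential, Finset.sum_apply]

lemma strictlyPlurisubharmonic_gridPotential [InnerProductSpace ℝ V] (hk : 0 < k) (hM : 0 < M)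
    (hr : 0 < r) (hL : 0 < L) : StrictlyPlurisubharmonic (k + 2) (gridPotential f a r L M) :=
  .sum ⟨0, mem_latticeBox.2 fun _ => by positivity⟩ fun _ _ =>
    (strictlyPlurisubharmonic_neg_rieszKernel hk (by positivity) _).const_smul (by positivity)

lemma gridPotential_nonpos (hr : 0 < r) (x : V) : gridPotential f a r L M x ≤ 0 := by
  rw [gridPotential_apply, neg_nonpos]
  exact Finset.sum_nonneg fun _ _ => mul_nonneg (by positivity) rieszKernel_nonneg

lemma le_gridPotential (hM : 0 < M) (hr : 0 < r) {x : V} {d : ℝ} (hd : 0 < d)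
    (hdist : ∀ z ∈ closedBall a (2 * r), d ≤ ‖x - f z‖) :
    -(3 * r / d) ^ k ≤ gridPotential f a r L M x := by
  have hM' : (M : ℝ) ≠ 0 := by positivity
  rw [gridPotential_apply, neg_le_neg_iff]
  calc _ ≤ (latticeBox k (3 * M)).card • ((r / M) ^ k * (d ^ k)⁻¹) :=
        Finset.sum_le_card_nsmul _ _ _ fun q hq => by
          gcongr
          exact rieszKernel_le hd (hdist _ (gridPoint_mem_closedBall (by positivity) hr.le
            (div_mul_cancel₀ r hM') hq))
    _ = (3 * r / d) ^ k := by
      rw [card_latticeBox, nsmul_eq_mul, Nat.cast_pow, ← inv_pow, ← mul_pow, ← mul_pow]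
      congr 1
      push_cast
      field_simp

lemma gridPotential_le (hk : 0 < k) (hM : 0 < M) (hr : 0 < r) {L : NNReal} (hL : 0 < L)
    (hf : LipschitzOnWith L f (closedBall a (2 * r))) {z : Fin k → ℝ} (hz : z ∈ closedBall a r) :
    gridPotential f a r L M (f z) ≤
      -((2 * L : ℝ) ^ k)⁻¹ * ∑ j ∈ Finset.range M, ((j : ℝ) + 1)⁻¹ := by
  have hhM : r / M * M = r := div_mul_cancel₀ r (by positivity)
  have hh : 0 < r / M := by positivity
  set h := r / M
  rw [gridPotential_apply, neg_mul, neg_le_neg_iff]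
  calc _ ≤ ((2 * L : ℝ) ^ k)⁻¹ * ∑ q ∈ latticeBox k (3 * M),
          (h / max h (dist z (gridPoint (fun i => a i - r) h q))) ^ k := by
        gcongr
        exact harmonic_sum_le_sum_grid hk hh hhM hz
    _ ≤ _ := by
      rw [Finset.mul_sum]
      refine Finset.sum_le_sum fun q hq => ?_
      set y := gridPoint (fun i => a i - r) h q
      have hdist : ‖f z - f y‖ ≤ L * max h (dist z y) := by
        rw [← dist_eq_norm]
        refine (hf.dist_le_mul z (closedBall_subset_closedBall (by linarith) hz) y
          (gridPoint_mem_closedBall hh.le hr.le hhM hq)).trans ?_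
        gcongr
        exact le_max_right _ _
      have hkernel : ((2 * (L * max h (dist z y))) ^ k)⁻¹ ≤ rieszKernel k (L * h) (f y) (f z) :=
        le_rieszKernel (by positivity) (by gcongr; exact le_max_left _ _) hdist
      calc ((2 * L : ℝ) ^ k)⁻¹ * (h / max h (dist z y)) ^ k
          = h ^ k * ((2 * (L * max h (dist z y))) ^ k)⁻¹ := by
            rw [← mul_assoc, mul_pow _ (max _ _), div_pow, mul_inv]
            ring
        _ ≤ _ := by gcongr

variable [InnerProductSpace ℝ V] {x₁ : V} {B : Set V}

lemma isPolarFrom_lipschitz_image_of_pos (hk : 0 < k) (hr : 0 < r) {L : NNReal}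
    (hf : LipschitzOnWith L f (closedBall a (2 * r))) (hx₁ : x₁ ∉ f '' closedBall a (2 * r)) :
    IsPolarFrom (k + 2) x₁ B (f '' closedBall a r) := by
  have hL : 0 < L + 1 := by positivity
  have hf' : LipschitzOnWith (L + 1) f (closedBall a (2 * r)) := hf.weaken le_self_add
  have hcompact : IsCompact (f '' closedBall a (2 * r)) :=
    (isCompact_closedBall a (2 * r)).image_of_continuousOn hf.continuousOn
  obtain ⟨d, hd, hball⟩ := Metric.isOpen_iff.1 hcompact.isClosed.isOpen_compl x₁ hx₁
  have hdist : ∀ z ∈ closedBall a (2 * r), d ≤ ‖x₁ - f z‖ := fun z hz => by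
    by_contra! hlt
    exact hball (mem_ball_iff_norm'.2 hlt) (mem_image_of_mem f hz)
  refine isPolarFrom_of_bounded_at_pole ((3 * r / d) ^ k) fun K => ?_
  have hc : 0 < ((2 * (L + 1 : NNReal) : ℝ) ^ k)⁻¹ := by positivity
  obtain ⟨M, hMK, hM⟩ := ((Real.tendsto_sum_range_one_div_nat_succ_atTop.const_mul_atTop
    hc).eventually_gt_atTop K |>.and (Filter.eventually_gt_atTop 0)).exists
  refine ⟨gridPotential f a r (L + 1 : NNReal) M,
    strictlyPlurisubharmonic_gridPotential hk hM hr hL, fun x _ => gridPotential_nonpos hr x,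
    le_gridPotential hM hr hd hdist, ?_⟩
  rintro _ ⟨⟨z, hz, rfl⟩, -⟩
  refine (gridPotential_le hk hM hr hL hf' hz).trans_lt ?_
  rw [neg_mul, neg_lt_neg_iff]
  simpa only [one_div] using hMK

lemma isPolarFrom_lipschitz_image (hr : 0 < r) {L : NNReal}
    (hf : LipschitzOnWith L f (closedBall a (2 * r))) (hx₁ : x₁ ∉ f '' closedBall a (2 * r))
    (hB : Bornology.IsBounded B) : IsPolarFrom (k + 2) x₁ B (f '' closedBall a r) := by
  rcases k.eq_zero_or_pos with rfl | hk
  · have himage (s : ℝ) (hs : 0 < s) : f '' closedBall a s = {f a} := by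
      rw [(nonempty_closedBall.2 hs.le).eq_univ, image_univ, range_unique, Subsingleton.elim a]
    rw [himage _ (by positivity)] at hx₁
    rw [himage r hr]
    exact isPolarFrom_singleton hx₁ hB
  · exact isPolarFrom_lipschitz_image_of_pos hk hr hf hx₁

/-- Near `x ∈ E`, the set `E` is the image of a `k`-dimensional cube under a Lipschitz map that
still takes values in `E` on the concentric cube of twice the size. Cubes are balls of the
supremum norm on `Fin k → ℝ`. -/
def HasLipschitzPatchAt (k : ℕ) (E : Set V) (x : V) : Prop :=
  ∃ (f : (Fin k → ℝ) → V) (a : Fin k → ℝ) (r : ℝ) (L : NNReal), 0 < r ∧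
    LipschitzOnWith L f (closedBall a (2 * r)) ∧ f '' closedBall a (2 * r) ⊆ E ∧
    f '' closedBall a r ∈ nhdsWithin x E

lemma isPolar_of_hasLipschitzPatchAt {E : Set V} (hE : IsCompact E)
    (hpatch : ∀ x ∈ E, HasLipschitzPatchAt k E x) : IsPolar (k + 2) E := fun x₁ hx₁ B hB =>
  hE.induction_on (p := IsPolarFrom (k + 2) x₁ B) (isPolarFrom_empty (by positivity) x₁ hB)
    (fun _ _ hST hT => hT.mono hST) (fun _ _ => .union) fun x hx =>
      let ⟨_, _, _, _, hr, hf, hfE, hnhds⟩ := hpatch x hx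
      ⟨_, hnhds, isPolarFrom_lipschitz_image hr hf (fun h => hx₁ (hfE h)) hB⟩

end LipschitzPatch

section Submanifold

variable {n k : ℕ}

/-- The inclusion of `ℝᵏ` into `ℝⁿ` as the first `k` coordinates. For `k > n` the last `k - n`
coordinates are dropped. -/
def coordInclusion (n k : ℕ) : (Fin k → ℝ) →L[ℝ] En n :=
  (EuclideanSpace.equiv (Fin n) ℝ).symm.toContinuousLinearMap ∘L ContinuousLinearMap.pi fun i =>
    if hi : (i : ℕ) < k then ContinuousLinearMap.proj ⟨i, hi⟩ else 0

lemma coordInclusion_apply (z : Fin k → ℝ) (i : Fin n) :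
    coordInclusion n k z i = if hi : (i : ℕ) < k then z ⟨i, hi⟩ else 0 := by
  by_cases hi : (i : ℕ) < k <;> simp [coordInclusion, hi]

lemma coordInclusion_comp_castLE (hkn : k ≤ n) {z : En n}
    (hz : ∀ i : Fin n, k ≤ (i : ℕ) → z i = 0) :
    coordInclusion n k (fun i => z (Fin.castLE hkn i)) = z := by
  ext i
  rw [coordInclusion_apply]
  split_ifs with hi
  · rfl
  · exact (hz i (not_lt.1 hi)).symm

lemma IsSmoothClosedSubmanifold.hasLipschitzPatchAt (hkn : k ≤ n) {E : Set (En n)}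
    (hE : IsSmoothClosedSubmanifold k E) {x : En n} (hx : x ∈ E) : HasLipschitzPatchAt k E x := by
  obtain ⟨U, V, φ, ψ, hU, hV, hxU, hφ, hψ, -, -, hψφ, -, hflat⟩ := hE.2 x hx
  let coords (y : En n) : Fin k → ℝ := fun i => φ y (Fin.castLE hkn i)
  have hmem_flat {y : En n} (hy : y ∈ E ∩ U) : φ y ∈ V ∧ ∀ i : Fin n, k ≤ (i : ℕ) → φ y i = 0 :=
    hflat.subset (mem_image_of_mem φ hy)
  have hcoords {y : En n} (hy : y ∈ E ∩ U) : coordInclusion n k (coords y) = φ y :=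
    coordInclusion_comp_castLE hkn (hmem_flat hy).2
  have hxV : coordInclusion n k (coords x) ∈ V := hcoords ⟨hx, hxU⟩ ▸ (hmem_flat ⟨hx, hxU⟩).1
  have hparam : ContDiffAt ℝ 1 (ψ ∘ coordInclusion n k) (coords x) :=
    ((hψ.contDiffAt (hV.mem_nhds hxV)).of_le (by exact_mod_cast le_top)).comp _
      (coordInclusion n k).contDiff.contDiffAt
  obtain ⟨L, t, ht, hlip⟩ := hparam.exists_lipschitzOnWith
  have hpreimage : coordInclusion n k ⁻¹' V ∈ nhds (coords x) :=
    (coordInclusion n k).continuous.continuousAt.preimage_mem_nhds (hV.mem_nhds hxV)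
  obtain ⟨ρ, hρ, hball⟩ :=
    Metric.nhds_basis_closedBall.mem_iff.1 (Filter.inter_mem ht hpreimage)
  have hhalf : 2 * (ρ / 2) = ρ := mul_div_cancel₀ ρ two_ne_zero
  refine ⟨ψ ∘ coordInclusion n k, coords x, ρ / 2, L, half_pos hρ, ?_, ?_, ?_⟩
  · exact hlip.mono (hhalf.symm ▸ fun z hz => (hball hz).1)
  · rintro _ ⟨z, hz, rfl⟩
    obtain ⟨y, hy, hyz⟩ : coordInclusion n k z ∈ φ '' (E ∩ U) := hflat ▸
      ⟨(hball (hhalf ▸ hz)).2, fun i hi => by simp [coordInclusion_apply, hi.not_gt]⟩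
    rw [Function.comp_apply, ← hyz, hψφ y hy.2]
    exact hy.1
  · have hφx : ContinuousAt φ x := hφ.continuousOn.continuousAt (hU.mem_nhds hxU)
    have hcoordsx : ContinuousAt coords x :=
      continuousAt_pi.2 fun i =>
        (EuclideanSpace.proj (Fin.castLE hkn i)).continuous.continuousAt.comp hφx
    filter_upwards [self_mem_nhdsWithin, mem_nhdsWithin_of_mem_nhds (hU.mem_nhds hxU),
      mem_nhdsWithin_of_mem_nhds
        (hcoordsx.preimage_mem_nhds (closedBall_mem_nhds _ (half_pos hρ)))] with y hyE hyU hy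
    exact ⟨coords y, hy, by rw [Function.comp_apply, hcoords ⟨hyE, hyU⟩, hψφ y hyU]⟩

lemma IsSmoothClosedSubmanifold.isPolar (hkn : k ≤ n) {E : Set (En n)}
    (hE : IsSmoothClosedSubmanifold k E) : IsPolar (k + 2) E :=
  isPolar_of_hasLipschitzPatchAt hE.1 fun _ hx => hE.hasLipschitzPatchAt hkn hx

lemma isPolar_of_empty_or_submanifold {k : ℤ} (hk₁ : -1 ≤ k) (hk₂ : k ≤ n) {E : Set (En n)}
    (hE : if k = -1 then E = ∅ else IsSmoothClosedSubmanifold k.toNat E) :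
    IsPolar (k + 2).toNat E := by
  split_ifs at hE with hk
  · subst hk hE
    exact isPolar_empty (by norm_num)
  · rw [show (k + 2).toNat = k.toNat + 2 by omega]
    exact hE.isPolar (by omega)

end Submanifold

section MaximumPrinciple

variable {n m : ℕ} {E Ω : Set (En n)} {u : En n → ℝ}

-- Otherwise `u - φ` attains a negative minimum over `closure Ω \ N`, necessarily in `Ω \ E`,
-- where a translate of `φ` is a test function violating the differential inequality.
lemma StrictlyPlurisubharmonic.le_of_isViscositySupersolution (hmn : m ≤ n) {φ : En n → ℝ}
    (hφ : StrictlyPlurisubharmonic m φ) (hΩ : IsOpen Ω) (hΩbdd : Bornology.IsBounded Ω)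
    (hu : LowerSemicontinuousOn u (closure Ω \ E))
    (hvisc : IsViscositySupersolution
      (fun _ _ _ M => sumSmallestEigs m M) (fun _ => 0) (Ω \ E) u)
    (hfrontier : ∀ y ∈ frontier Ω \ E, φ y ≤ u y) {N : Set (En n)} (hN : IsOpen N)
    (hEN : E ∩ closure Ω ⊆ N) (hφN : ∀ y ∈ N ∩ (Ω \ E), φ y ≤ u y) :
    ∀ x ∈ Ω \ E, φ x ≤ u x := by
  intro x hx
  by_contra! hlt
  have hsub : closure Ω \ N ⊆ closure Ω \ E := fun y hy => ⟨hy.1, fun hyE => hy.2 (hEN ⟨hyE, hy.1⟩)⟩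
  have hxN : x ∈ closure Ω \ N :=
    ⟨subset_closure hx.1, fun hxN => (hφN x ⟨hxN, hx⟩).not_gt hlt⟩
  have hlsc : LowerSemicontinuousOn (fun y => u y + -φ y) (closure Ω \ N) :=
    (hu.mono hsub).add (hφ.contDiff.continuous.neg.lowerSemicontinuous.lowerSemicontinuousOn _)
  obtain ⟨x₀, hx₀, hmin⟩ := hlsc.exists_isMinOn ⟨x, hxN⟩ (hΩbdd.isCompact_closure.diff hN)
  have hmin' : ∀ y ∈ closure Ω \ N, u x₀ - φ x₀ ≤ u y - φ y := fun y hy => by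
    simpa only [← sub_eq_add_neg] using isMinOn_iff.1 hmin y hy
  have hneg : u x₀ - φ x₀ < 0 := (hmin' x hxN).trans_lt (sub_neg.2 hlt)
  have hx₀Ω : x₀ ∈ Ω := by
    by_contra hx₀Ω
    have hx₀_frontier : x₀ ∈ frontier Ω := hΩ.frontier_eq ▸ ⟨hx₀.1, hx₀Ω⟩
    linarith [hfrontier x₀ ⟨hx₀_frontier, (hsub hx₀).2⟩]
  have htest := hφ.const_add (u x₀ - φ x₀)
  refine (htest.sumSmallestEigs_hess_pos hmn x₀).not_ge
    (hvisc _ htest.contDiff.contDiffOn x₀ ⟨hx₀Ω, (hsub hx₀).2⟩ (by ring) ?_)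
  filter_upwards [self_mem_nhdsWithin] with y hy
  by_cases hyN : y ∈ N
  · linarith [hφN y ⟨hyN, hy⟩]
  · linarith [hmin' y ⟨subset_closure hy.1, hyN⟩]

theorem maximum_principle_outside_submanifold_general (hmn : m ≤ n) (hE : IsPolar m E)
    (hΩopen : IsOpen Ω) (hΩbdd : Bornology.IsBounded Ω)
    (hu : LowerSemicontinuousOn u (closure Ω \ E)) (hubd : BddBelow (u '' (Ω \ E)))
    (hvisc : IsViscositySupersolution
      (fun _ _ _ M => sumSmallestEigs m M) (fun _ => 0) (Ω \ E) u) :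
    ∀ a : ℝ, (∀ y ∈ frontier Ω \ E, a ≤ u y) → ∀ x ∈ Ω \ E, a ≤ u x := by
  intro a ha x hx
  obtain ⟨b, hb⟩ := hubd
  refine le_of_forall_pos_le_add fun ε hε => ?_
  obtain ⟨w, hw, hw_nonpos, hw_pole, hw_lt⟩ := hE x hx.2 _ hΩbdd.closure ε hε (a - b)
  have hbarrier : a + w x ≤ u x :=
    (hw.const_add a).le_of_isViscositySupersolution hmn hΩopen hΩbdd hu hvisc
      (fun y hy => by linarith [ha y hy, hw_nonpos y (frontier_subset_closure hy.1)])
      (isOpen_lt hw.contDiff.continuous continuous_const) hw_lt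
      (fun y hy => by linarith [hy.1.out, hb (mem_image_of_mem u hy.2)]) x hx
  linarith

end MaximumPrinciple

/-- **Proposition 1.1 (maximum principle).** Let `E` be a smooth closed `k`-dimensional
submanifold of ℝⁿ, `-1 ≤ k ≤ n-2` (with `E = ∅` for `k = -1`). If `u ∈ LSC(Ω̄ \ E)` is
bounded below on `Ω \ E` and satisfies `λ₁(∇²u) + ⋯ + λ_{k+2}(∇²u) ≤ 0` in `Ω \ E` in
the viscosity sense, then `u ≥ inf_{∂Ω \ E} u` on `Ω \ E`. -/
theorem maximum_principle_outside_submanifold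
    {n : ℕ} (hn : 2 ≤ n) (k : ℤ) (hk₁ : -1 ≤ k) (hk₂ : k ≤ (n : ℤ) - 2)
    (E : Set (En n))
    (hE : if k = -1 then E = ∅ else IsSmoothClosedSubmanifold k.toNat E)
    (Ω : Set (En n)) (hΩopen : IsOpen Ω) (hΩconn : IsConnected Ω)
    (hΩbdd : Bornology.IsBounded Ω)
    (u : En n → ℝ) (hu : LowerSemicontinuousOn u (closure Ω \ E))
    (hubd : BddBelow (u '' (Ω \ E)))
    (hvisc : IsViscositySupersolution
      (fun _ _ _ M => sumSmallestEigs (k + 2).toNat M) (fun _ => 0) (Ω \ E) u) :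
    ∀ m : ℝ, (∀ y ∈ frontier Ω \ E, m ≤ u y) → ∀ x ∈ Ω \ E, m ≤ u x := by
  exact maximum_principle_outside_submanifold_general (by omega)
    (isPolar_of_empty_or_submanifold hk₁ (by omega) hE) hΩopen hΩbdd hu hubd hvisc
end
end

section
/- Let Ω ⊂ ℝⁿ be a bounded open set, let F(x,s,p,M) be continuous on Ω × ℝ × ℝⁿ × S^{n×n} with continuous partial derivatives in (s,p,M), and suppose there is a unit vector ξ ∈ ℝⁿ such that F_{M_ij}(x,s,p,M) ξ_i ξ_j > 0 for all values of the arguments, and that F_s(x,s,p,M) ≤ 0 for all values of the arguments. Let u ∈ LSC(Ω̄) with inf_Ω u > −∞ and v ∈ C²(Ω) ∩ C(Ω̄) satisfy F(x, u, ∇u, ∇²u) ≤ F(x, v, ∇v, ∇²v) in Ω in the viscosity sense, and u ≥ v on ∂Ω. Then u ≥ v in Ω. -/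
open Set Metric

noncomputable section

attribute [local instance] Matrix.normedAddCommGroup Matrix.normedSpace

/-!
Suppose `u < v` somewhere and perturb `v` to `φ = v + ε exp (α ⟪ξ, x⟫)`. At a point `x` this moves
`(∇v, ∇²v)` by `a (ξ, α ξ ⊗ ξ)` with `a = ε α exp (α ⟪ξ, x⟫)`. Since `u - v` is lower semicontinuous
and nonnegative on `∂Ω`, the minimum of `u - φ` is attained in a compact `K ⊆ Ω` on which `u < v`,
and `K` does not depend on `α` or `ε`. By ellipticity along `ξ`, for `α` large the derivative of `F`
in the direction `(ξ, α ξ ⊗ ξ)` is positive over `K`, so for `ε` small `F` strictly increases from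
`(v, ∇v, ∇²v)` to `(v, ∇φ, ∇²φ)`. The viscosity inequality at the minimum and the monotonicity in
`s` say the opposite.
-/

open Filter Topology

section Semicontinuity

variable {X : Type*} [TopologicalSpace X] {S : Set X} {g w : X → ℝ}

lemma lowerSemicontinuousOn_sub_continuousOn (hg : LowerSemicontinuousOn g S)
    (hw : ContinuousOn w S) : LowerSemicontinuousOn (fun x => g x - w x) S := by
  simpa only [sub_eq_add_neg, Pi.neg_apply] using hg.add hw.neg.lowerSemicontinuousOn

lemma exists_isMinOn_sub_and_le_add (hS : IsCompact S) (hg : LowerSemicontinuousOn g S)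
    (hw : ContinuousOn w S) {b : ℝ} (hwb : ∀ x ∈ S, w x ∈ Icc 0 b) {x₀ : X} (hx₀ : x₀ ∈ S) :
    ∃ y ∈ S, IsMinOn (fun x => g x - w x) S y ∧ g y ≤ g x₀ + b := by
  obtain ⟨y, hy, hmin⟩ :=
    (lowerSemicontinuousOn_sub_continuousOn hg hw).exists_isMinOn ⟨x₀, hx₀⟩ hS
  have hle : g y - w y ≤ g x₀ - w x₀ := hmin hx₀
  exact ⟨y, hy, hmin, by linarith [(hwb y hy).2, (hwb x₀ hx₀).1]⟩

lemma closure_inter_preimage_Iic_subset (hg : ∀ x ∈ frontier S, 0 ≤ g x) {b : ℝ} (hb : b < 0) :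
    closure S ∩ g ⁻¹' Iic b ⊆ S := by
  rintro x ⟨hx, hgx : g x ≤ b⟩
  by_contra hxS
  exact (hgx.trans_lt hb).not_ge (hg x ⟨hx, fun hint => hxS (interior_subset hint)⟩)

end Semicontinuity

section Compactness

variable {X : Type*} [TopologicalSpace X] {K : Set X} {f g : X → ℝ}

lemma exists_pos_forall_add_mul_pos (hK : IsCompact K) (hf : ContinuousOn f K)
    (hg : ContinuousOn g K) (hgpos : ∀ x ∈ K, 0 < g x) :
    ∃ α > 0, ∀ x ∈ K, 0 < f x + α * g x := by
  obtain ⟨B, hB⟩ := hK.bddAbove_image (hf.neg.div hg fun x hx => (hgpos x hx).ne')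
  refine ⟨max B 0 + 1, by positivity, fun x hx => ?_⟩
  have hlt : -f x / g x < max B 0 + 1 :=
    (hB (mem_image_of_mem _ hx)).trans_lt (by linarith [le_max_left B 0])
  linarith [(div_lt_iff₀ (hgpos x hx)).1 hlt]

lemma exists_pos_forall_mul_le (hK : IsCompact K) (hf : ContinuousOn f K) {b : ℝ} (hb : 0 < b) :
    ∃ ε > 0, ∀ x ∈ K, ε * f x ≤ b := by
  obtain ⟨ε, hε, hpos⟩ := exists_pos_forall_add_mul_pos hK hf.neg
    (continuousOn_const (c := b)) fun _ _ => hb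
  refine ⟨ε⁻¹, inv_pos.2 hε, fun x hx => (inv_mul_le_iff₀ hε).2 ?_⟩
  have hpos_x : 0 < -f x + ε * b := hpos x hx
  linarith

end Compactness

section StrictIncrease

variable {X E : Type*} [TopologicalSpace X] [NormedAddCommGroup E] [NormedSpace ℝ E]
  {K : Set X} {G : X → E → ℝ} {p : X → E}

lemma hasDerivAt_apply_add_smul {H : E → ℝ} (hH : Differentiable ℝ H) (r d : E) (t : ℝ) :
    HasDerivAt (fun t : ℝ => H (r + t • d)) (fderiv ℝ H (r + t • d) d) t := by
  have hline : HasDerivAt (fun t : ℝ => r + t • d) d t := by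
    simpa only [one_smul] using ((hasDerivAt_id' t).smul_const d).const_add r
  exact (hH _).hasFDerivAt.comp_hasDerivAt t hline

lemma lt_apply_add_smul {H : E → ℝ} (hH : Differentiable ℝ H) {r d : E} {a : ℝ} (ha : 0 < a)
    (hpos : ∀ t ∈ Ioo 0 a, 0 < fderiv ℝ H (r + t • d) d) : H r < H (r + a • d) := by
  have hder := hasDerivAt_apply_add_smul hH r d
  have hmono : StrictMonoOn (fun t : ℝ => H (r + t • d)) (Icc 0 a) :=
    strictMonoOn_of_deriv_pos (convex_Icc 0 a) (HasDerivAt.continuousOn fun t _ => hder t)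
      fun t ht => by
        rw [(hder t).deriv]
        exact hpos t (by rwa [interior_Icc] at ht)
  simpa only [zero_smul, add_zero] using
    hmono (left_mem_Icc.2 ha.le) (right_mem_Icc.2 ha.le) ha

lemma exists_pos_forall_fderiv_add_smul_pos (hK : IsCompact K)
    (hG' : ContinuousOn (fun q : X × E => fderiv ℝ (G q.1) q.2) (K ×ˢ univ))
    (hp : ContinuousOn p K) {d : E} (hpos : ∀ x ∈ K, 0 < fderiv ℝ (G x) (p x) d) :
    ∃ δ > (0 : ℝ), ∀ x ∈ K, ∀ t ∈ Icc 0 δ, 0 < fderiv ℝ (G x) (p x + t • d) d := by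
  have hcont : ContinuousOn (fun q : ℝ × X => fderiv ℝ (G q.2) (p q.2 + q.1 • d) d)
      (univ ×ˢ K) := by
    have hpoint : ContinuousOn (fun q : ℝ × X => (q.2, p q.2 + q.1 • d)) (univ ×ˢ K) :=
      continuousOn_snd.prodMk
        ((hp.comp continuousOn_snd fun q hq => hq.2).add (by fun_prop))
    exact (hG'.comp hpoint fun q hq => ⟨hq.2, mem_univ _⟩).clm_apply continuousOn_const
  have hnear : ∀ᶠ t in 𝓝 (0 : ℝ), ∀ x ∈ K, x ∈ K → 0 < fderiv ℝ (G x) (p x + t • d) d :=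
    hK.eventually_forall_of_forall_eventually fun x hx => by
      have hpos₀ : 0 < fderiv ℝ (G x) (p x + (0 : ℝ) • d) d := by
        simpa only [zero_smul, add_zero] using hpos x hx
      filter_upwards [eventually_nhdsWithin_iff.1
        ((hcont (0, x) ⟨mem_univ _, hx⟩).eventually_const_lt hpos₀)] with q hq hqK
      exact hq ⟨mem_univ _, hqK⟩
  obtain ⟨δ, hδ, hball⟩ := Metric.nhds_basis_closedBall.eventually_iff.1 hnear
  refine ⟨δ, hδ, fun x hx t ht => hball ?_ x hx hx⟩
  rw [mem_closedBall_zero_iff, Real.norm_of_nonneg ht.1]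
  exact ht.2

lemma exists_pos_forall_lt_apply_add_smul (hK : IsCompact K)
    (hG : ∀ x ∈ K, Differentiable ℝ (G x))
    (hG' : ContinuousOn (fun q : X × E => fderiv ℝ (G q.1) q.2) (K ×ˢ univ))
    (hp : ContinuousOn p K) (d : E) {e : E} (he : ∀ x ∈ K, 0 < fderiv ℝ (G x) (p x) e) :
    ∃ α > (0 : ℝ), ∃ δ > (0 : ℝ), ∀ x ∈ K, ∀ a ∈ Ioc 0 δ,
      G x (p x) < G x (p x + a • (d + α • e)) := by
  have hcont (c : E) : ContinuousOn (fun x => fderiv ℝ (G x) (p x) c) K :=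
    (hG'.comp (continuousOn_id.prodMk hp) fun x hx => ⟨hx, mem_univ _⟩).clm_apply
      continuousOn_const
  obtain ⟨α, hα, hpos⟩ := exists_pos_forall_add_mul_pos hK (hcont d) (hcont e) he
  obtain ⟨δ, hδ, hposδ⟩ := exists_pos_forall_fderiv_add_smul_pos hK hG' hp (d := d + α • e)
    (by simpa only [map_add, map_smul, smul_eq_mul] using hpos)
  exact ⟨α, hα, δ, hδ, fun x hx a ha => lt_apply_add_smul (hG x hx) ha.1
    fun t ht => hposδ x hx t ⟨ht.1.le, ht.2.le.trans ha.2⟩⟩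

end StrictIncrease

section PartialDerivatives

variable {X D E W : Type*} [NormedAddCommGroup D] [NormedSpace ℝ D] [NormedAddCommGroup E]
  [NormedSpace ℝ E] [NormedAddCommGroup W] [NormedSpace ℝ W]

lemma differentiable_prodMk_right {H : D × E → W} (hH : Differentiable ℝ H) (s : D) :
    Differentiable ℝ fun r => H (s, r) :=
  hH.comp (by fun_prop)

lemma fderiv_prodMk_right {H : D × E → W} (hH : Differentiable ℝ H) (s : D) (r : E) :
    fderiv ℝ (fun r => H (s, r)) r = (fderiv ℝ H (s, r)).comp (.inr ℝ D E) :=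
  ((hH _).hasFDerivAt.comp r (hasFDerivAt_prodMk_right s r)).fderiv

lemma continuousOn_fderiv_prodMk_right [TopologicalSpace X] {Ω : Set X} {G : X → D × E → W}
    (hG : ∀ x ∈ Ω, Differentiable ℝ (G x))
    (hG' : ContinuousOn (fun q : X × D × E => fderiv ℝ (G q.1) q.2) {q | q.1 ∈ Ω}) :
    ContinuousOn (fun q : X × D × E => fderiv ℝ (fun r => G q.1 (q.2.1, r)) q.2.2)
      {q | q.1 ∈ Ω} :=
  (hG'.clm_comp continuousOn_const).congr fun q hq => fderiv_prodMk_right (hG q.1 hq) _ _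

lemma antitone_prodMk_left {H : ℝ × E → ℝ} (hH : Differentiable ℝ H) {r : E}
    (hs : ∀ s, deriv (fun s' => H (s', r)) s ≤ 0) : Antitone fun s => H (s, r) :=
  antitone_of_deriv_nonpos (hH.comp (by fun_prop)) hs

end PartialDerivatives

section Gradient

variable {V : Type*} [NormedAddCommGroup V] [InnerProductSpace ℝ V]

lemma fderiv_comp_inner_left {f : ℝ → ℝ} {ξ x : V} (hf : DifferentiableAt ℝ f (inner ℝ ξ x)) :
    fderiv ℝ (fun y => f (inner ℝ ξ y)) x = deriv f (inner ℝ ξ x) • innerSL ℝ ξ :=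
  (hf.hasDerivAt.comp_hasFDerivAt x (innerSL ℝ ξ).hasFDerivAt).fderiv

variable [CompleteSpace V]

lemma gradient_fun_add {φ ψ : V → ℝ} {x : V} (hφ : DifferentiableAt ℝ φ x)
    (hψ : DifferentiableAt ℝ ψ x) :
    gradient (fun y => φ y + ψ y) x = gradient φ x + gradient ψ x := by
  simp only [gradient, fderiv_fun_add hφ hψ, map_add]

lemma gradient_fun_add_const (φ : V → ℝ) (c : ℝ) (x : V) :
    gradient (fun y => φ y + c) x = gradient φ x := by
  simp only [gradient, fderiv_add_const]

lemma gradient_comp_inner_left {f : ℝ → ℝ} {ξ x : V}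
    (hf : DifferentiableAt ℝ f (inner ℝ ξ x)) :
    gradient (fun y => f (inner ℝ ξ y)) x = deriv f (inner ℝ ξ x) • ξ := by
  rw [gradient, fderiv_comp_inner_left hf, LinearIsometryEquiv.symm_apply_eq, map_smul]
  rfl

lemma continuousOn_gradient {φ : V → ℝ} {Ω : Set V} (hΩ : IsOpen Ω)
    (hφ : ContDiffOn ℝ 1 φ Ω) : ContinuousOn (gradient φ) Ω :=
  (LinearIsometryEquiv.continuous _).comp_continuousOn
    (hφ.continuousOn_fderiv_of_isOpen hΩ le_rfl)

end Gradient

section Hessian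

variable {n : ℕ} {φ ψ : En n → ℝ} {x : En n}

lemma hess_fun_add (hφ : ContDiffAt ℝ 2 φ x) (hψ : ContDiffAt ℝ 2 ψ x) :
    hess (fun y => φ y + ψ y) x = hess φ x + hess ψ x := by
  ext i j
  exact DFunLike.congr_fun (iteratedFDeriv_add_apply hφ hψ) _

lemma hess_fun_add_const (φ : En n → ℝ) (c : ℝ) (x : En n) :
    hess (fun y => φ y + c) x = hess φ x := by
  have hfderiv : fderiv ℝ (fun y => φ y + c) = fderiv ℝ φ := funext fun _ => fderiv_add_const c
  ext i j
  simp only [hess, Matrix.of_apply, iteratedFDeriv_two_apply, hfderiv]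

lemma hess_comp_inner_left {f : ℝ → ℝ} {ξ : En n} (hf : ContDiffAt ℝ 2 f (inner ℝ ξ x)) :
    hess (fun y => f (inner ℝ ξ y)) x
      = deriv (deriv f) (inner ℝ ξ x) • Matrix.vecMulVec ξ ξ := by
  have hfderiv : fderiv ℝ (fun y => f (inner ℝ ξ y)) =ᶠ[𝓝 x]
      fun y => deriv f (inner ℝ ξ y) • innerSL ℝ ξ := by
    have hinner : ContinuousAt (fun y : En n => inner ℝ ξ y) x := by fun_prop
    filter_upwards [hinner.eventually (hf.eventually (by simp))] with y hy
    exact fderiv_comp_inner_left (hy.differentiableAt two_ne_zero)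
  have hderiv : DifferentiableAt ℝ (deriv f) (inner ℝ ξ x) :=
    ((hf.fderiv_right one_add_one_eq_two.le).clm_apply contDiffAt_const).differentiableAt
      one_ne_zero
  have hcomp : HasFDerivAt (fun y => deriv f (inner ℝ ξ y))
      (deriv (deriv f) (inner ℝ ξ x) • innerSL ℝ ξ) x :=
    hderiv.hasDerivAt.comp_hasFDerivAt x (innerSL ℝ ξ).hasFDerivAt
  have hfderiv₂ : fderiv ℝ (fderiv ℝ fun y => f (inner ℝ ξ y)) x
      = (deriv (deriv f) (inner ℝ ξ x) • innerSL ℝ ξ).smulRight (innerSL ℝ ξ) :=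
    hfderiv.fderiv_eq.trans (hcomp.smul_const (innerSL ℝ ξ : En n →L[ℝ] ℝ)).fderiv
  ext i j
  simp only [hess, Matrix.of_apply, iteratedFDeriv_two_apply, hfderiv₂]
  simp [EuclideanSpace.inner_single_right, Matrix.vecMulVec_apply, mul_assoc]

lemma continuousOn_hess {Ω : Set (En n)} (hΩ : IsOpen Ω) (hφ : ContDiffOn ℝ 2 φ Ω) :
    ContinuousOn (hess φ) Ω := by
  have hcont : ContinuousOn (iteratedFDeriv ℝ 2 φ) Ω :=
    (hφ.continuousOn_iteratedFDerivWithin le_rfl hΩ.uniqueDiffOn).congr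
      fun x hx => (iteratedFDerivWithin_of_isOpen 2 hΩ hx).symm
  exact continuousOn_pi.2 fun i => continuousOn_pi.2 fun j =>
    (ContinuousMultilinearMap.apply ℝ (fun _ : Fin 2 => En n) ℝ
      ![EuclideanSpace.single i 1, EuclideanSpace.single j 1]).continuous.comp_continuousOn hcont

end Hessian

section ExponentialBarrier

variable {n : ℕ}

/-- The exponential barrier `ε exp (α ⟪ξ, x⟫)`, by which the comparison function is perturbed. -/
def expBarrier (ξ : En n) (α ε : ℝ) (x : En n) : ℝ :=
  ε * Real.exp (α * inner ℝ ξ x)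

variable (ξ : En n) (α ε : ℝ) (x : En n)

lemma contDiff_expBarrier : ContDiff ℝ 2 (expBarrier ξ α ε) :=
  contDiff_const.mul (contDiff_const.mul (innerSL ℝ ξ).contDiff).exp

lemma deriv_const_mul_exp_const_mul :
    deriv (fun t : ℝ => ε * Real.exp (α * t)) = fun t => α * (ε * Real.exp (α * t)) := by
  funext t
  rw [((((hasDerivAt_id' t).const_mul α).exp).const_mul ε).deriv]
  ring

lemma gradient_expBarrier : gradient (expBarrier ξ α ε) x = (α * expBarrier ξ α ε x) • ξ := by
  have hgrad := gradient_comp_inner_left (f := fun t => ε * Real.exp (α * t)) (ξ := ξ) (x := x)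
    (by fun_prop)
  rwa [deriv_const_mul_exp_const_mul] at hgrad

lemma hess_expBarrier :
    hess (expBarrier ξ α ε) x = (α * (α * expBarrier ξ α ε x)) • Matrix.vecMulVec ξ ξ := by
  have hhess := hess_comp_inner_left (f := fun t => ε * Real.exp (α * t)) (ξ := ξ) (x := x)
    (by fun_prop)
  rwa [deriv_const_mul_exp_const_mul, deriv_const_mul_field, deriv_const_mul_exp_const_mul]
    at hhess

variable {ε x} {v : En n → ℝ}

lemma exists_expBarrier_mem_Ioc {S : Set (En n)} (hS : IsCompact S) {b : ℝ} (hb : 0 < b) :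
    ∃ ε, ∀ x ∈ S, expBarrier ξ α ε x ∈ Ioc 0 b := by
  obtain ⟨ε, hε, hle⟩ := exists_pos_forall_mul_le hS
    (f := fun x => Real.exp (α * inner ℝ ξ x)) (by fun_prop) hb
  exact ⟨ε, fun x hx => ⟨mul_pos hε (Real.exp_pos _), hle x hx⟩⟩

lemma gradient_add_expBarrier (hv : DifferentiableAt ℝ v x) :
    gradient (fun y => v y + expBarrier ξ α ε y) x
      = gradient v x + (α * expBarrier ξ α ε x) • ξ := by
  rw [gradient_fun_add hv ((contDiff_expBarrier ξ α ε).differentiable two_ne_zero x),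
    gradient_expBarrier]

lemma hess_add_expBarrier (hv : ContDiffAt ℝ 2 v x) :
    hess (fun y => v y + expBarrier ξ α ε y) x
      = hess v x + (α * (α * expBarrier ξ α ε x)) • Matrix.vecMulVec ξ ξ := by
  rw [hess_fun_add hv (contDiff_expBarrier ξ α ε).contDiffAt, hess_expBarrier]

end ExponentialBarrier

section Viscosity

variable {n : ℕ} {Ω : Set (En n)} {F : En n → ℝ → En n → Matrix (Fin n) (Fin n) ℝ → ℝ}
  {ξ : En n} {u v : En n → ℝ}

lemma IsViscositySupersolution.le_of_isLocalMinOn {f φ : En n → ℝ} {x₀ : En n}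
    (hu : IsViscositySupersolution F f Ω u) (hφ : ContDiffOn ℝ 2 φ Ω) (hx₀ : x₀ ∈ Ω)
    (hmin : IsLocalMinOn (fun x => u x - φ x) Ω x₀) :
    F x₀ (u x₀) (gradient φ x₀) (hess φ x₀) ≤ f x₀ := by
  have hmin_shift : IsLocalMinOn (fun x => u x - (φ x + (u x₀ - φ x₀))) Ω x₀ := by
    filter_upwards [hmin] with x hx
    linarith
  have htouch := hu (fun x => φ x + (u x₀ - φ x₀)) (hφ.add contDiffOn_const) x₀ hx₀ (by ring)
    hmin_shift
  rwa [gradient_fun_add_const, hess_fun_add_const, add_sub_cancel] at htouch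

lemma exists_pos_forall_lt_of_elliptic (hΩ : IsOpen Ω)
    (hF : ∀ x ∈ Ω, ∀ s, Differentiable ℝ
      fun r : En n × Matrix (Fin n) (Fin n) ℝ => F x s r.1 r.2)
    (hF' : ContinuousOn
      (fun q : En n × ℝ × En n × Matrix (Fin n) (Fin n) ℝ =>
        fderiv ℝ (fun r : En n × Matrix (Fin n) (Fin n) ℝ => F q.1 q.2.1 r.1 r.2) q.2.2)
      {q | q.1 ∈ Ω})
    (hell : ∀ x ∈ Ω, ∀ s p M,
      0 < deriv (fun τ : ℝ => F x s p (M + τ • Matrix.vecMulVec ξ ξ)) 0)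
    (hv : ContDiffOn ℝ 2 v Ω) {K : Set (En n)} (hK : IsCompact K) (hKΩ : K ⊆ Ω) :
    ∃ α > (0 : ℝ), ∃ δ > (0 : ℝ), ∀ x ∈ K, ∀ a ∈ Ioc 0 δ,
      F x (v x) (gradient v x) (hess v x)
        < F x (v x) (gradient v x + a • ξ) (hess v x + (α * a) • Matrix.vecMulVec ξ ξ) := by
  have hjet : ContinuousOn (fun x => (gradient v x, hess v x)) K :=
    ((continuousOn_gradient hΩ (hv.of_le one_le_two)).prodMk (continuousOn_hess hΩ hv)).mono hKΩ
  have hfderiv : ContinuousOn (fun q : En n × En n × Matrix (Fin n) (Fin n) ℝ =>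
      fderiv ℝ (fun r : En n × Matrix (Fin n) (Fin n) ℝ => F q.1 (v q.1) r.1 r.2) q.2)
      (K ×ˢ univ) :=
    hF'.comp (continuousOn_fst.prodMk (((hv.continuousOn.mono hKΩ).comp continuousOn_fst
      fun q hq => hq.1).prodMk continuousOn_snd)) fun q hq => hKΩ hq.1
  have hξξ : ∀ x ∈ K,
      0 < fderiv ℝ (fun r : En n × Matrix (Fin n) (Fin n) ℝ => F x (v x) r.1 r.2)
      (gradient v x, hess v x) (0, Matrix.vecMulVec ξ ξ) := fun x hx => by
    have hder := hasDerivAt_apply_add_smul (hF x (hKΩ hx) (v x)) (gradient v x, hess v x)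
      (0, Matrix.vecMulVec ξ ξ) 0
    rw [zero_smul, add_zero] at hder
    refine lt_of_lt_of_eq ?_ hder.deriv
    simpa only [Prod.smul_mk, Prod.mk_add_mk, smul_zero, add_zero] using
      hell x (hKΩ hx) (v x) (gradient v x) (hess v x)
  obtain ⟨α, hα, δ, hδ, hlt⟩ := exists_pos_forall_lt_apply_add_smul hK
    (fun x hx => hF x (hKΩ hx) (v x)) hfderiv hjet (ξ, 0) hξξ
  refine ⟨α, hα, δ, hδ, fun x hx a ha => ?_⟩
  simpa only [Prod.smul_mk, Prod.mk_add_mk, smul_zero, add_zero, zero_add, smul_smul,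
    mul_comm a α] using hlt x hx a ha

theorem viscosity_maximum_principle_general (hΩ : IsOpen Ω) (hΩbdd : Bornology.IsBounded Ω)
    (hF : ∀ x ∈ Ω, ∀ s, Differentiable ℝ
      fun r : En n × Matrix (Fin n) (Fin n) ℝ => F x s r.1 r.2)
    (hF' : ContinuousOn
      (fun q : En n × ℝ × En n × Matrix (Fin n) (Fin n) ℝ =>
        fderiv ℝ (fun r : En n × Matrix (Fin n) (Fin n) ℝ => F q.1 q.2.1 r.1 r.2) q.2.2)
      {q | q.1 ∈ Ω})
    (hell : ∀ x ∈ Ω, ∀ s p M,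
      0 < deriv (fun τ : ℝ => F x s p (M + τ • Matrix.vecMulVec ξ ξ)) 0)
    (hanti : ∀ x ∈ Ω, ∀ p M, Antitone fun s => F x s p M)
    (hu : LowerSemicontinuousOn u (closure Ω))
    (hv : ContDiffOn ℝ 2 v Ω) (hvcont : ContinuousOn v (closure Ω))
    (hvisc : IsViscositySupersolution F (fun x => F x (v x) (gradient v x) (hess v x)) Ω u)
    (hbdry : ∀ x ∈ frontier Ω, v x ≤ u x) :
    ∀ x ∈ Ω, v x ≤ u x := by
  intro x₀ hx₀
  by_contra! hlt
  obtain ⟨c, hc, hcx₀⟩ : ∃ c > 0, u x₀ - v x₀ + c = -c := ⟨(v x₀ - u x₀) / 2, by linarith, by ring⟩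
  have hcompact : IsCompact (closure Ω) := hΩbdd.isCompact_closure
  have hlsc := lowerSemicontinuousOn_sub_continuousOn hu hvcont
  have hKΩ : closure Ω ∩ (fun x => u x - v x) ⁻¹' Iic (-c) ⊆ Ω :=
    closure_inter_preimage_Iic_subset (fun x hx => sub_nonneg.2 (hbdry x hx)) (neg_lt_zero.2 hc)
  obtain ⟨α, hα, δ, hδ, hincr⟩ := exists_pos_forall_lt_of_elliptic hΩ hF hF' hell hv
    (hlsc.isCompact_inter_preimage_Iic hcompact (-c)) hKΩ
  obtain ⟨ε, hε⟩ := exists_expBarrier_mem_Ioc ξ α hcompact (lt_min hc (div_pos hδ hα))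
  obtain ⟨y, hy, hmin, hyc⟩ := exists_isMinOn_sub_and_le_add hcompact hlsc
    (contDiff_expBarrier ξ α ε).continuous.continuousOn
    (fun x hx => ⟨(hε x hx).1.le, (hε x hx).2.trans (min_le_left _ _)⟩) (subset_closure hx₀)
  rw [hcx₀] at hyc
  have hyΩ : y ∈ Ω := hKΩ ⟨hy, hyc⟩
  have hvy : ContDiffAt ℝ 2 v y := hv.contDiffAt (hΩ.mem_nhds hyΩ)
  have hvisc_y := hvisc.le_of_isLocalMinOn (hv.add (contDiff_expBarrier ξ α ε).contDiffOn) hyΩ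
    (by simpa only [sub_sub] using (hmin.on_subset subset_closure).localize)
  rw [gradient_add_expBarrier ξ α (hvy.differentiableAt two_ne_zero),
    hess_add_expBarrier ξ α hvy] at hvisc_y
  have hincr_y := hincr y ⟨hy, hyc⟩ (α * expBarrier ξ α ε y)
    ⟨mul_pos hα (hε y hy).1, (le_div_iff₀' hα).1 ((hε y hy).2.trans (min_le_right _ _))⟩
  exact (hincr_y.trans_le (hanti y hyΩ _ _ (by linarith : u y ≤ v y))).not_ge hvisc_y

end Viscosity

/-- **Theorem 2.1 (maximum principle).** Suppose `F` is elliptic in some fixed unit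
direction `ξ` and `F_s ≤ 0`. If `u` is an LSC, bounded-below viscosity supersolution of
`F(x,u,∇u,∇²u) ≤ F(x,v,∇v,∇²v)` in the bounded open set `Ω`, with `v ∈ C²(Ω) ∩ C(Ω̄)`
and `u ≥ v` on `∂Ω`, then `u ≥ v` in `Ω`. -/
theorem viscosity_maximum_principle
    {n : ℕ} (Ω : Set (En n)) (hΩopen : IsOpen Ω) (hΩbdd : Bornology.IsBounded Ω)
    (F : En n → ℝ → En n → Matrix (Fin n) (Fin n) ℝ → ℝ)
    (hFcont : ContinuousOn
      (fun q : En n × ℝ × En n × Matrix (Fin n) (Fin n) ℝ => F q.1 q.2.1 q.2.2.1 q.2.2.2)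
      {q | q.1 ∈ Ω})
    (hFC1 : ∀ x ∈ Ω, ContDiff ℝ 1
      (fun r : ℝ × En n × Matrix (Fin n) (Fin n) ℝ => F x r.1 r.2.1 r.2.2))
    (hFderivCont : ContinuousOn
      (fun q : En n × ℝ × En n × Matrix (Fin n) (Fin n) ℝ =>
        fderiv ℝ (fun r : ℝ × En n × Matrix (Fin n) (Fin n) ℝ => F q.1 r.1 r.2.1 r.2.2) q.2)
      {q | q.1 ∈ Ω})
    (ξ : En n) (hξ : ‖ξ‖ = 1)
    (hFell : ∀ x ∈ Ω, ∀ (s : ℝ) (p : En n) (M : Matrix (Fin n) (Fin n) ℝ),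
      0 < deriv (fun τ : ℝ => F x s p (M + τ • Matrix.of fun i j => ξ i * ξ j)) 0)
    (hFs : ∀ x ∈ Ω, ∀ (s : ℝ) (p : En n) (M : Matrix (Fin n) (Fin n) ℝ),
      deriv (fun s' : ℝ => F x s' p M) s ≤ 0)
    (u : En n → ℝ) (hu : LowerSemicontinuousOn u (closure Ω))
    (hubd : BddBelow (u '' Ω))
    (v : En n → ℝ) (hv : ContDiffOn ℝ 2 v Ω) (hvcont : ContinuousOn v (closure Ω))
    (hvisc : IsViscositySupersolution F
      (fun x => F x (v x) (gradient v x) (hess v x)) Ω u)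
    (hbdry : ∀ x ∈ frontier Ω, v x ≤ u x) :
    ∀ x ∈ Ω, v x ≤ u x := by
  have hF x (hx : x ∈ Ω) := (hFC1 x hx).differentiable one_ne_zero
  exact viscosity_maximum_principle_general hΩopen hΩbdd
    (fun x hx s => differentiable_prodMk_right (hF x hx) s)
    (continuousOn_fderiv_prodMk_right hF hFderivCont) hFell
    (fun x hx p M => antitone_prodMk_left (r := (p, M)) (hF x hx) fun s => hFs x hx s p M)
    hu hv hvcont hvisc hbdry
end
end
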